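/- Let F be a finite field with q elements of odd characteristic and let a ∈ Fˣ with a² ≠ 1. Let C₁ be the conjugacy class of diag(a, a⁻¹) in GL₂(F) and let C₂ = C₃ be the regular unipotent conjugacy class of GL₂(F). Then the number of triples (S₁, S₂, S₃) ∈ C₁ × C₂ × C₃ with S₁S₂S₃ = 1 equals q³ − q; that is, such triples form a single orbit under simultaneous conjugation by GL₂(F). -/

import Mathlib

/-!
Conjugate `S₂` to `U = !![1, 1; 0, 1]`. Then `tr (U * S₃) - 2` is the lower left entry `t` of `S₃`,
and `t ≠ 0` because `S₂ * S₃ = S₁⁻¹` has trace `tr S₁ ≠ 2`. Conjugation by an upper unitriangular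
matrix fixes `U` and, as `t ≠ 0`, can be used to make both diagonal entries of `S₃` equal to `1`, so
that `S₃` becomes `!![1, 0; t, 1]` with `t = tr S₁ - 2`. Hence `GL₂` acts transitively on the
triples. Only scalar matrices commute with both `U` and `!![1, 0; t, 1]`, so `PGL₂` acts simply
transitively, and the number of triples is its order.
-/

open Matrix
open scoped MatrixGroups

section Monoid

variable {M : Type*} [Monoid M]

lemma conjAct_smul_eq_iff_mul_eq_mul {g : ConjAct Mˣ} {a b : M} :
    g • a = b ↔ (g.ofConjAct : Mˣ) * a = b * (g.ofConjAct : Mˣ) := by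
  rw [ConjAct.units_smul_def, Units.mul_inv_eq_iff_eq_mul]

lemma isConj_iff_exists_conjAct_smul_eq {a b : M} :
    IsConj a b ↔ ∃ g : ConjAct Mˣ, g • a = b := by
  simp only [conjAct_smul_eq_iff_mul_eq_mul]
  rfl

lemma isConj_conjAct_smul (g : ConjAct Mˣ) (a : M) : IsConj a (g • a) :=
  isConj_iff_exists_conjAct_smul_eq.2 ⟨g, rfl⟩

/-- The triples with product `1` whose entries are conjugate to `a`, `b` and `c` respectively: the
representations of the fundamental group of the three-punctured sphere with prescribed conjugacy
classes of local monodromies. Conjugation is by units of `M`. -/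
def conjTriples (a b c : M) : Set (M × M × M) :=
  {x | IsConj a x.1 ∧ IsConj b x.2.1 ∧ IsConj c x.2.2 ∧ x.1 * x.2.1 * x.2.2 = 1}

lemma conjAct_smul_mem_conjTriples {a b c : M} {x : M × M × M} (g : ConjAct Mˣ)
    (hx : x ∈ conjTriples a b c) : g • x ∈ conjTriples a b c := by
  obtain ⟨ha, hb, hc, hprod⟩ := hx
  refine ⟨ha.trans (isConj_conjAct_smul g _), hb.trans (isConj_conjAct_smul g _),
    hc.trans (isConj_conjAct_smul g _), ?_⟩
  simp only [Prod.smul_fst, Prod.smul_snd, ← smul_mul', hprod, smul_one]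

end Monoid

lemma card_orbit_of_stabilizer_eq_center {G X : Type*} [Group G] [MulAction (ConjAct G) X] {x : X}
    (h : MulAction.stabilizer (ConjAct G) x = Subgroup.center (ConjAct G)) :
    Nat.card (MulAction.orbit (ConjAct G) x) = Nat.card (G ⧸ Subgroup.center G) :=
  calc Nat.card (MulAction.orbit (ConjAct G) x)
      = (MulAction.stabilizer (ConjAct G) x).index := (MulAction.index_stabilizer _ x).symm
    _ = (Subgroup.center (ConjAct G)).index := by rw [h]
    _ = Nat.card (G ⧸ Subgroup.center G) := rfl

section Card

variable {F : Type*} [Field F] [Fintype F]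

lemma card_center_GL (n : Type*) [Fintype n] [DecidableEq n] [Nonempty n] :
    Nat.card (Subgroup.center (GL n F)) = Fintype.card F - 1 := by
  have hinj : Function.Injective (GeneralLinearGroup.scalar n : Fˣ →* GL n F) :=
    Units.map_injective fun _ _ ↦ scalar_inj.1
  rw [GeneralLinearGroup.center_eq_range_scalar,
    ← Nat.card_congr (MonoidHom.ofInjective hinj).toEquiv, Nat.card_units,
    Nat.card_eq_fintype_card]

lemma card_PGL_mul_card_sub_one (n : ℕ) [NeZero n] :
    Nat.card PGL(n, F) * (Fintype.card F - 1) =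
      ∏ i : Fin n, (Fintype.card F ^ n - Fintype.card F ^ (i : ℕ)) := by
  rw [← card_GL_field, ← card_center_GL (Fin n)]
  exact (Subgroup.card_eq_card_quotient_mul_card_subgroup _).symm

lemma card_PGL_two : (Nat.card PGL(2, F) : ℤ) = (Fintype.card F : ℤ) ^ 3 - Fintype.card F := by
  have hq : 1 < Fintype.card F := Fintype.one_lt_card
  have hmul := card_PGL_mul_card_sub_one (F := F) 2
  simp only [Fin.prod_univ_two, Fin.val_zero, Fin.val_one, pow_zero, pow_one] at hmul
  zify [hq.le, Nat.one_le_pow 2 _ (zero_lt_one.trans hq), Nat.le_self_pow two_ne_zero] at hmul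
  have hq' : (Fintype.card F : ℤ) - 1 ≠ 0 := by omega
  apply mul_right_cancel₀ hq'
  linear_combination hmul

end Card

section Matrix

lemma add_inv_ne_two {R : Type*} [CommRing R] [IsReduced R] {a : Rˣ} (ha : (a : R) ≠ 1) :
    (a : R) + (a⁻¹ : Rˣ) ≠ 2 := by
  intro h
  have hsq : ((a : R) - 1) ^ 2 = 0 := by linear_combination (a : R) * h - a.mul_inv
  exact ha (sub_eq_zero.1 (sq_eq_zero_iff.1 hsq))

section Scalar

variable {n R : Type*} [Fintype n] [DecidableEq n] [Semiring R] {i j : n}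

lemma notMem_range_scalar_of_apply_ne_zero {A : Matrix n n R} (hij : i ≠ j) (hA : A i j ≠ 0) :
    A ∉ Set.range (scalar n) := by
  rintro ⟨r, rfl⟩
  exact hA (by rw [scalar_apply, diagonal_apply_ne _ hij])

lemma diagonal_notMem_range_scalar {d : n → R} (hd : d i ≠ d j) :
    diagonal d ∉ Set.range (scalar n) := by
  rintro ⟨r, hr⟩
  have hr_eq : (fun _ ↦ r) = d := diagonal_injective hr
  exact hd (by rw [← hr_eq])

end Scalar

section ConjugacyInvariants

variable {n R : Type*} [Fintype n] [DecidableEq n] [CommRing R] {A B : Matrix n n R}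

lemma trace_eq_of_isConj (h : IsConj A B) : A.trace = B.trace := by
  obtain ⟨g, rfl⟩ := isConj_iff_exists_conjAct_smul_eq.1 h
  rw [ConjAct.units_smul_def, trace_units_conj]

lemma det_eq_of_isConj (h : IsConj A B) : A.det = B.det := by
  obtain ⟨g, rfl⟩ := isConj_iff_exists_conjAct_smul_eq.1 h
  rw [ConjAct.units_smul_def, det_units_conj]

end ConjugacyInvariants

lemma trace_eq_of_mul_eq_one_fin_two {R : Type*} [CommRing R] {A B : Matrix (Fin 2) (Fin 2) R}
    (hAB : A * B = 1) (hdet : B.det = 1) : A.trace = B.trace := by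
  obtain rfl : A = B.adjugate :=
    left_inv_eq_right_inv hAB (by rw [mul_adjugate, hdet, one_smul])
  rw [adjugate_fin_two, trace_fin_two_of, trace_fin_two, add_comm]

variable {F : Type*} [Field F]

lemma isConj_companion_fin_two {A : Matrix (Fin 2) (Fin 2) F}
    (hA : A ∉ Set.range (scalar (Fin 2))) : IsConj !![0, -A.det; 1, A.trace] A := by
  obtain ⟨a, b, c, d, rfl⟩ : ∃ a b c d, A = !![a, b; c, d] := ⟨_, _, _, _, eta_fin_two A⟩
  -- A nonscalar matrix has a cyclic vector `v = (x, y)`; the columns of `P` are `v` and `A v`.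
  obtain ⟨x, y, hxy⟩ : ∃ x y : F, x * (c * x + d * y) - (a * x + b * y) * y ≠ 0 := by
    by_contra! h
    have hc : c = 0 := by simpa using h 1 0
    have hb : b = 0 := by simpa using h 0 1
    have hd : d = a := by simpa [hb, hc, sub_eq_zero] using h 1 1
    exact hA ⟨a, by rw [scalar_apply, diagonal_fin_two, hb, hc, hd]⟩
  obtain ⟨P, hP⟩ : ∃ P : GL (Fin 2) F, P.val = !![x, a * x + b * y; y, c * x + d * y] :=
    ⟨.mkOfDetNeZero _ (by rwa [det_fin_two_of]), rfl⟩
  refine ⟨P, ?_⟩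
  simp only [SemiconjBy, hP, det_fin_two_of, trace_fin_two_of, mul_fin_two,
    EmbeddingLike.apply_eq_iff_eq, vecCons_inj, and_true]
  refine ⟨⟨?_, ?_⟩, ?_, ?_⟩ <;> ring

lemma isConj_of_trace_eq_of_det_eq {A B : Matrix (Fin 2) (Fin 2) F}
    (hA : A ∉ Set.range (scalar (Fin 2))) (hB : B ∉ Set.range (scalar (Fin 2)))
    (htr : A.trace = B.trace) (hdet : A.det = B.det) : IsConj A B := by
  have hA' := isConj_companion_fin_two hA
  rw [htr, hdet] at hA'
  exact hA'.symm.trans (isConj_companion_fin_two hB)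

lemma exists_conjAct_smul_lower_eq {C : Matrix (Fin 2) (Fin 2) F} (htr : C.trace = 2)
    (hdet : C.det = 1) (hC : C 1 0 ≠ 0) :
    ∃ g : ConjAct (GL (Fin 2) F), g • !![1, 1; 0, 1] = (!![1, 1; 0, 1] : Matrix _ _ F) ∧
      g • !![1, 0; C 1 0, 1] = C := by
  obtain ⟨x, y, z, w, rfl⟩ : ∃ x y z w, C = !![x, y; z, w] := ⟨_, _, _, _, eta_fin_two C⟩
  change z ≠ 0 at hC
  rw [trace_fin_two_of] at htr
  rw [det_fin_two_of] at hdet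
  obtain rfl : w = 2 - x := by linear_combination htr
  obtain rfl : y = -(x - 1) ^ 2 / z := by
    field_simp
    linear_combination -hdet
  obtain ⟨P, hP⟩ : ∃ P : GL (Fin 2) F, P.val = !![1, (x - 1) / z; 0, 1] :=
    ⟨.mkOfDetNeZero _ (by simp), rfl⟩
  refine ⟨ConjAct.toConjAct P, ?_, ?_⟩ <;>
    simp only [conjAct_smul_eq_iff_mul_eq_mul, ConjAct.ofConjAct_toConjAct, hP, mul_fin_two,
      of_apply, cons_val_zero, cons_val_one, EmbeddingLike.apply_eq_iff_eq, vecCons_inj, and_true]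
  · simp [add_comm]
  · refine ⟨⟨?_, ?_⟩, ?_, ?_⟩ <;> field_simp <;> ring

lemma exists_conjAct_smul_upper_lower_eq {B C : Matrix (Fin 2) (Fin 2) F}
    (hB : IsConj !![1, 1; 0, 1] B) (hC : IsConj !![1, 1; 0, 1] C) (htr : (B * C).trace ≠ 2) :
    ∃ g : ConjAct (GL (Fin 2) F), g • !![1, 1; 0, 1] = B ∧
      g • !![1, 0; (B * C).trace - 2, 1] = C := by
  obtain ⟨g, rfl⟩ := isConj_iff_exists_conjAct_smul_eq.1 hB
  obtain ⟨K, rfl⟩ : ∃ K, g • K = C := ⟨g⁻¹ • C, smul_inv_smul g C⟩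
  have hK : IsConj !![1, 1; 0, 1] K := hC.trans (isConj_conjAct_smul g K).symm
  have hK_trace : K.trace = 2 := by
    rw [← trace_eq_of_isConj hK, trace_fin_two_of, one_add_one_eq_two]
  have hK_det : K.det = 1 := by
    rw [← det_eq_of_isConj hK]
    simp
  rw [← smul_mul', ← trace_eq_of_isConj (isConj_conjAct_smul g _)] at htr ⊢
  have hK_lower : (!![1, 1; 0, 1] * K).trace - 2 = K 1 0 := by
    rw [← hK_trace, eta_fin_two K, mul_fin_two]
    simp only [trace_fin_two_of, of_apply, cons_val_zero, cons_val_one]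
    ring
  rw [hK_lower]
  obtain ⟨u, hu_upper, hu_lower⟩ :=
    exists_conjAct_smul_lower_eq hK_trace hK_det (hK_lower ▸ sub_ne_zero.2 htr)
  exact ⟨g * u, by rw [mul_smul, hu_upper], by rw [mul_smul, hu_lower]⟩

end Matrix

section StandardTriple

/-- The normal form, up to simultaneous conjugation, of a triple with product `1` whose last two
entries are regular unipotent and whose first entry has trace `t + 2 ≠ 2`. The first entry is the
inverse of the product of the other two, written out. -/
def standardTriple {R : Type*} [CommRing R] (t : R) :
    Matrix (Fin 2) (Fin 2) R × Matrix (Fin 2) (Fin 2) R × Matrix (Fin 2) (Fin 2) R :=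
  (!![1, -1; -t, 1 + t], !![1, 1; 0, 1], !![1, 0; t, 1])

lemma standardTriple_prod_eq_one {R : Type*} [CommRing R] (t : R) :
    (standardTriple t).1 * (standardTriple t).2.1 * (standardTriple t).2.2 = 1 := by
  simp [standardTriple, one_fin_two]

lemma stabilizer_standardTriple {R : Type*} [CommRing R] [NoZeroDivisors R] {t : R} (ht : t ≠ 0) :
    MulAction.stabilizer (ConjAct (GL (Fin 2) R)) (standardTriple t) =
      Subgroup.center (ConjAct (GL (Fin 2) R)) := by
  ext g
  have hcenter : g ∈ Subgroup.center (ConjAct (GL (Fin 2) R)) ↔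
      (g.ofConjAct : GL (Fin 2) R).val ∈ Set.range (scalar (Fin 2)) :=
    GeneralLinearGroup.mem_center_iff_val_mem_range_scalar
  rw [hcenter, MulAction.mem_stabilizer_iff]
  simp only [standardTriple, Prod.smul_mk, Prod.mk.injEq, conjAct_smul_eq_iff_mul_eq_mul]
  constructor
  · rintro ⟨-, hupper, hlower⟩
    generalize (g.ofConjAct : GL (Fin 2) R).val = P at *
    obtain ⟨x, y, z, w, rfl⟩ : ∃ x y z w, P = !![x, y; z, w] := ⟨_, _, _, _, eta_fin_two P⟩
    have hz : z = 0 := by simpa using congr($hupper 0 0)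
    have hw : w = x := by simpa [add_comm x] using congr($hupper.symm 0 1)
    have hy : y = 0 := by simpa [ht] using congr($hlower 0 0)
    exact ⟨x, by rw [scalar_apply, diagonal_fin_two, hy, hz, hw]⟩
  · rintro ⟨r, hr⟩
    simp only [← hr, scalar_comm r (Commute.all r), and_self]

variable {F : Type*} [Field F] {A : Matrix (Fin 2) (Fin 2) F}

lemma standardTriple_mem_conjTriples (hA : A ∉ Set.range (scalar (Fin 2))) (hdet : A.det = 1)
    (htr : A.trace ≠ 2) :
    standardTriple (A.trace - 2) ∈ conjTriples A !![1, 1; 0, 1] !![1, 1; 0, 1] := by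
  have hfirst : (standardTriple (A.trace - 2)).1 ∉ Set.range (scalar (Fin 2)) :=
    notMem_range_scalar_of_apply_ne_zero zero_ne_one (by simp [standardTriple])
  have hupper : (!![1, 1; 0, 1] : Matrix (Fin 2) (Fin 2) F) ∉ Set.range (scalar (Fin 2)) :=
    notMem_range_scalar_of_apply_ne_zero zero_ne_one (by simp)
  have hlower : (standardTriple (A.trace - 2)).2.2 ∉ Set.range (scalar (Fin 2)) :=
    notMem_range_scalar_of_apply_ne_zero one_ne_zero (sub_ne_zero.2 htr)
  refine ⟨isConj_of_trace_eq_of_det_eq hA hfirst ?_ ?_, .refl _,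
    isConj_of_trace_eq_of_det_eq hupper hlower ?_ ?_, standardTriple_prod_eq_one _⟩
  · rw [standardTriple, trace_fin_two_of]
    ring
  · simp [standardTriple, hdet]
  · simp [standardTriple, trace_fin_two_of]
  · simp [standardTriple]

lemma conjTriples_subset_orbit_standardTriple (htr : A.trace ≠ 2) :
    conjTriples A !![1, 1; 0, 1] !![1, 1; 0, 1] ⊆
      MulAction.orbit (ConjAct (GL (Fin 2) F)) (standardTriple (A.trace - 2)) := by
  rintro ⟨S₁, S₂, S₃⟩ ⟨h₁, h₂, h₃, hprod⟩
  dsimp only at h₁ h₂ h₃ hprod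
  rw [mul_assoc] at hprod
  have hdet : (S₂ * S₃).det = 1 := by
    rw [det_mul, ← det_eq_of_isConj h₂, ← det_eq_of_isConj h₃]
    simp
  have htrace : (S₂ * S₃).trace = A.trace := by
    rw [← trace_eq_of_mul_eq_one_fin_two hprod hdet, trace_eq_of_isConj h₁]
  obtain ⟨g, hg₂, hg₃⟩ := exists_conjAct_smul_upper_lower_eq h₂ h₃ (htrace ▸ htr)
  rw [htrace] at hg₃
  have hprod_smul : g • (standardTriple (A.trace - 2)).1 * (S₂ * S₃) = 1 := by
    rw [← hg₂, ← hg₃, ← smul_mul', ← smul_mul', ← mul_assoc]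
    exact (congrArg (g • ·) (standardTriple_prod_eq_one _)).trans (smul_one g)
  have hg₁ : g • (standardTriple (A.trace - 2)).1 = S₁ :=
    left_inv_eq_right_inv hprod_smul (mul_eq_one_comm.1 hprod)
  exact ⟨g, Prod.ext hg₁ (Prod.ext hg₂ hg₃)⟩

end StandardTriple

theorem GL2_triple_count_one_ss_two_unipotent_general
    {F : Type*} [Field F] {A : Matrix (Fin 2) (Fin 2) F}
    (hA : A ∉ Set.range (scalar (Fin 2))) (hdet : A.det = 1) (htr : A.trace ≠ 2) :
    conjTriples A !![1, 1; 0, 1] !![1, 1; 0, 1] =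
        MulAction.orbit (ConjAct (GL (Fin 2) F)) (standardTriple (A.trace - 2)) ∧
      MulAction.stabilizer (ConjAct (GL (Fin 2) F)) (standardTriple (A.trace - 2)) =
        Subgroup.center (ConjAct (GL (Fin 2) F)) := by
  refine ⟨(conjTriples_subset_orbit_standardTriple htr).antisymm ?_,
    stabilizer_standardTriple (sub_ne_zero.2 htr)⟩
  rintro _ ⟨g, rfl⟩
  exact conjAct_smul_mem_conjTriples g (standardTriple_mem_conjTriples hA hdet htr)

lemma card_conjTriples_of_notMem_range_scalar {F : Type*} [Field F] [Fintype F]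
    {A : Matrix (Fin 2) (Fin 2) F} (hA : A ∉ Set.range (scalar (Fin 2))) (hdet : A.det = 1)
    (htr : A.trace ≠ 2) :
    (Nat.card (conjTriples A !![1, 1; 0, 1] !![1, 1; 0, 1]) : ℤ) =
      (Fintype.card F : ℤ) ^ 3 - Fintype.card F := by
  obtain ⟨horbit, hstab⟩ := GL2_triple_count_one_ss_two_unipotent_general hA hdet htr
  rw [horbit, card_orbit_of_stabilizer_eq_center hstab]
  exact card_PGL_two

/-- Genus 0, three punctures, `GL₂`, with one strongly regular semisimple class
(class of `diag(a,a⁻¹)`, `a² ≠ 1`) and two regular unipotent classes: the number of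
triples `(S₁,S₂,S₃) ∈ C₁ × C₂ × C₃` with `S₁S₂S₃ = 1` is `q³ - q`. -/
theorem GL2_triple_count_one_ss_two_unipotent
    {F : Type*} [Field F] [Fintype F] (hchar : ringChar F ≠ 2)
    (q : ℕ) (hq : q = Fintype.card F)
    (a : Fˣ) (ha : (a : F) ^ 2 ≠ 1) :
    (Nat.card {x : Matrix (Fin 2) (Fin 2) F × Matrix (Fin 2) (Fin 2) F ×
        Matrix (Fin 2) (Fin 2) F //
        IsConj (Matrix.diagonal ![(a : F), ((a⁻¹ : Fˣ) : F)]) x.1 ∧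
        IsConj (!![1, 1; 0, 1] : Matrix (Fin 2) (Fin 2) F) x.2.1 ∧
        IsConj (!![1, 1; 0, 1] : Matrix (Fin 2) (Fin 2) F) x.2.2 ∧
        x.1 * x.2.1 * x.2.2 = 1} : ℤ) = (q : ℤ) ^ 3 - q := by
  subst hq
  have hne_one : (a : F) ≠ 1 := fun h ↦ ha (by rw [h, one_pow])
  have hne_inv : (a : F) ≠ (a⁻¹ : Fˣ) := fun h ↦ ha (by rw [sq]; nth_rw 2 [h]; exact a.mul_inv)
  exact card_conjTriples_of_notMem_range_scalar
    (diagonal_notMem_range_scalar (i := 0) (j := 1) hne_inv) (by simp)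
    (by simpa [trace_fin_two] using add_inv_ne_two hne_one)
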